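/- Let h₀ > 0 and t₁ < t₂ be real numbers, and let u, v, w : [t₁,t₂] → ℝ be functions such that u and w are differentiable, u(t) ≥ 0, v(t) ≥ 0, w(t) > 0, u'(t) ≤ h₀·u(t) + v(t)/h₀, and w'(t) ≤ −2h₀·w(t) for all t ∈ [t₁,t₂], with v·w integrable. Then ∫_{t₁}^{t₂} v(t) w(t) dt ≥ h₀·(u(t₂)w(t₂) − u(t₁)w(t₁)) + h₀² ∫_{t₁}^{t₂} u(t) w(t) dt. -/

import Mathlib

/-!
The growth bound for `u` and the decay bound for `w` combine, by the product rule, into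
`(u w)' ≤ h₀ u w + v w / h₀ - 2 h₀ u w = v w / h₀ - h₀ u w`: the decay of the volume density
outweighs the growth of `u` by exactly `h₀`. Integrating over `[t₁, t₂]` and multiplying by `h₀`
gives the estimate.
-/

open Set MeasureTheory

section ProductGrowth

lemma mul_add_mul_le_of_le_mul_add {R : Type*} [CommRing R] [LinearOrder R] [IsStrictOrderedRing R]
    {x y x' y' α β p : R} (hx : 0 ≤ x) (hy : 0 ≤ y) (hx' : x' ≤ α * x + p) (hy' : y' ≤ β * y) :
    x' * y + x * y' ≤ (α + β) * (x * y) + p * y :=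
  calc
    x' * y + x * y' ≤ (α * x + p) * y + x * (β * y) := by gcongr
    _ = (α + β) * (x * y) + p * y := by ring

variable {a b : ℝ} {f g f' g' α β p : ℝ → ℝ}

theorem mul_sub_mul_le_integral_of_deriv_right_le (hab : a ≤ b)
    (hfc : ContinuousOn f (Icc a b)) (hgc : ContinuousOn g (Icc a b))
    (hf : ∀ t ∈ Ioo a b, HasDerivWithinAt f (f' t) (Ioi t) t)
    (hg : ∀ t ∈ Ioo a b, HasDerivWithinAt g (g' t) (Ioi t) t)
    (hf_nonneg : ∀ t ∈ Ioo a b, 0 ≤ f t) (hg_nonneg : ∀ t ∈ Ioo a b, 0 ≤ g t)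
    (hf' : ∀ t ∈ Ioo a b, f' t ≤ α t * f t + p t) (hg' : ∀ t ∈ Ioo a b, g' t ≤ β t * g t)
    (hint : IntervalIntegrable (fun t => (α t + β t) * (f t * g t) + p t * g t) volume a b) :
    f b * g b - f a * g a ≤ ∫ t in a..b, ((α t + β t) * (f t * g t) + p t * g t) :=
  intervalIntegral.sub_le_integral_of_hasDeriv_right_of_le hab (hfc.mul hgc)
    (fun t ht => (hf t ht).mul (hg t ht))
    ((intervalIntegrable_iff_integrableOn_Icc_of_le hab).1 hint)
    (fun t ht => mul_add_mul_le_of_le_mul_add (hf_nonneg t ht) (hg_nonneg t ht)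
      (hf' t ht) (hg' t ht))

end ProductGrowth

theorem slice_estimate_one_forms_general {h₀ t₁ t₂ : ℝ} (hh₀ : 0 < h₀) (ht : t₁ ≤ t₂)
    {u v w u' w' : ℝ → ℝ}
    (huc : ContinuousOn u (Icc t₁ t₂)) (hwc : ContinuousOn w (Icc t₁ t₂))
    (hu : ∀ t ∈ Ioo t₁ t₂, HasDerivWithinAt u (u' t) (Ioi t) t)
    (hw : ∀ t ∈ Ioo t₁ t₂, HasDerivWithinAt w (w' t) (Ioi t) t)
    (hu_nonneg : ∀ t ∈ Ioo t₁ t₂, 0 ≤ u t) (hw_nonneg : ∀ t ∈ Ioo t₁ t₂, 0 ≤ w t)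
    (hu' : ∀ t ∈ Ioo t₁ t₂, u' t ≤ h₀ * u t + v t / h₀)
    (hw' : ∀ t ∈ Ioo t₁ t₂, w' t ≤ -2 * h₀ * w t)
    (hvw : IntervalIntegrable (fun t => v t * w t) volume t₁ t₂) :
    h₀ * (u t₂ * w t₂ - u t₁ * w t₁) + h₀ ^ 2 * ∫ t in t₁..t₂, u t * w t ≤
      ∫ t in t₁..t₂, v t * w t := by
  have huw : IntervalIntegrable (fun t => u t * w t) volume t₁ t₂ :=
    (huc.mul hwc).intervalIntegrable_of_Icc ht
  have integrand_eq (t : ℝ) : (h₀ + -2 * h₀) * (u t * w t) + v t / h₀ * w t =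
      h₀⁻¹ * (v t * w t) - h₀ * (u t * w t) := by ring
  have boundary_le : u t₂ * w t₂ - u t₁ * w t₁ ≤
      h₀⁻¹ * (∫ t in t₁..t₂, v t * w t) - h₀ * ∫ t in t₁..t₂, u t * w t := by
    have hint := (hvw.const_mul h₀⁻¹).sub (huw.const_mul h₀)
    simpa only [integrand_eq, intervalIntegral.integral_sub (hvw.const_mul h₀⁻¹)
      (huw.const_mul h₀), intervalIntegral.integral_const_mul] using
      mul_sub_mul_le_integral_of_deriv_right_le ht huc hwc hu hw hu_nonneg hw_nonneg hu' hw'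
        (by simpa only [integrand_eq] using hint)
  calc
    h₀ * (u t₂ * w t₂ - u t₁ * w t₁) + h₀ ^ 2 * ∫ t in t₁..t₂, u t * w t
      ≤ h₀ * (h₀⁻¹ * (∫ t in t₁..t₂, v t * w t) - h₀ * ∫ t in t₁..t₂, u t * w t) +
          h₀ ^ 2 * ∫ t in t₁..t₂, u t * w t := by gcongr
    _ = ∫ t in t₁..t₂, v t * w t := by field_simp; ring

/-- One-dimensional slice estimate for 1-forms: with u ≥ 0, v ≥ 0, w > 0,
u' ≤ h₀u + v/h₀ and w' ≤ −2h₀w on [t₁,t₂], one has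
∫ v w ≥ h₀(u(t₂)w(t₂) − u(t₁)w(t₁)) + h₀² ∫ u w. -/
theorem slice_estimate_one_forms
    (h₀ t₁ t₂ : ℝ) (hh₀ : h₀ > 0) (ht : t₁ < t₂)
    (u v w u' w' : ℝ → ℝ)
    (hu : ∀ t ∈ Set.Icc t₁ t₂, HasDerivAt u (u' t) t)
    (hw : ∀ t ∈ Set.Icc t₁ t₂, HasDerivAt w (w' t) t)
    (hu0 : ∀ t ∈ Set.Icc t₁ t₂, 0 ≤ u t)
    (hv0 : ∀ t ∈ Set.Icc t₁ t₂, 0 ≤ v t)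
    (hwpos : ∀ t ∈ Set.Icc t₁ t₂, 0 < w t)
    (hu' : ∀ t ∈ Set.Icc t₁ t₂, u' t ≤ h₀ * u t + v t / h₀)
    (hw' : ∀ t ∈ Set.Icc t₁ t₂, w' t ≤ -2 * h₀ * w t)
    (hvw : IntervalIntegrable (fun t => v t * w t) MeasureTheory.volume t₁ t₂) :
    ∫ t in t₁..t₂, v t * w t ≥
      h₀ * (u t₂ * w t₂ - u t₁ * w t₁) + h₀ ^ 2 * ∫ t in t₁..t₂, u t * w t := by
  have mem {t : ℝ} (h : t ∈ Ioo t₁ t₂) : t ∈ Icc t₁ t₂ := Ioo_subset_Icc_self h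
  exact slice_estimate_one_forms_general hh₀ ht.le
    (HasDerivAt.continuousOn hu) (HasDerivAt.continuousOn hw)
    (fun t h => (hu t (mem h)).hasDerivWithinAt) (fun t h => (hw t (mem h)).hasDerivWithinAt)
    (fun t h => hu0 t (mem h)) (fun t h => (hwpos t (mem h)).le)
    (fun t h => hu' t (mem h)) (fun t h => hw' t (mem h)) hvw
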